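/- LP-rounding gives a factor-4 guarantee for the discrete guarding problem with disjoint guard and point sets: let f : ℝ → ℝ be a terrain, G ⊆ ℝ a finite set of guards with nonnegative weights w : G → ℝ, and N ⊆ ℝ a finite set of points with G ∩ N = ∅. Suppose x : G → ℝ is nonnegative and for every p ∈ N, Σ_{g ∈ G, g sees p} x(g) ≥ 1. Then there exists A ⊆ G such that every p ∈ N is seen by some g ∈ A and Σ_{g ∈ A} w(g) ≤ 4·Σ_{g ∈ G} w(g)·x(g). -/

import Mathlib

open scoped Classical

/-!
Split the points of `N` into those receiving at least half of their fractional coverage from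
guards on their left and those receiving at least half from guards on their right (no guard
coincides with a point, so one of the two happens). On each part `2 * x` is a fractional solution
of the one-sided covering problem, so it suffices to round each one-sided problem without loss:
the two integral solutions together cost at most `2 + 2 = 4` times the fractional optimum.

One-sided problems can be rounded without loss because of the order claim (`Sees.order_claim`):
if `a < b < c < d`, `a` sees `c` and `b` sees `d`, then `a` sees `d`. It says that the one-sided
visibility matrix contains no submatrix `[1 1; 1 0]` with rows and columns in the terrain order,
and covering problems with such matrices are integral (`exists_cover_le`), by a primal-dual
induction on the set of points.
-/

/-- `a` sees `b` on the terrain `f`. -/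
def Sees (f : ℝ → ℝ) (a b : ℝ) : Prop :=
  ∀ t ∈ Set.Icc (0:ℝ) 1, f ((1 - t) * a + t * b) ≤ (1 - t) * f a + t * f b

/-- Visibility of `a` and `b` in terms of the chord over `[a, b]`, with denominators cleared. -/
lemma Sees.iff_chord {f : ℝ → ℝ} {a b : ℝ} (hab : a < b) :
    Sees f a b ↔ ∀ z, a ≤ z → z ≤ b → f z * (b - a) ≤ (b - z) * f a + (z - a) * f b := by
  have hpos : 0 < b - a := sub_pos.2 hab
  constructor
  · intro h z haz hzb
    have ht := h ((z - a) / (b - a))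
      ⟨div_nonneg (by linarith) hpos.le, (div_le_one hpos).2 (by linarith)⟩
    have hz : (1 - (z - a) / (b - a)) * a + (z - a) / (b - a) * b = z := by
      field_simp
      ring
    rw [hz] at ht
    calc f z * (b - a)
        ≤ ((1 - (z - a) / (b - a)) * f a + (z - a) / (b - a) * f b) * (b - a) :=
          mul_le_mul_of_nonneg_right ht hpos.le
      _ = (b - z) * f a + (z - a) * f b := by
          field_simp
          ring
  · intro h t ht
    have hz := h ((1 - t) * a + t * b) (by nlinarith [ht.1]) (by nlinarith [ht.2])
    refine le_of_mul_le_mul_right (hz.trans_eq ?_) hpos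
    ring

lemma Sees.symm {f : ℝ → ℝ} {a b : ℝ} (h : Sees f a b) : Sees f b a := by
  intro t ht
  have := h (1 - t) ⟨by linarith [ht.2], by linarith [ht.1]⟩
  rw [sub_sub_cancel] at this
  rw [add_comm ((1 - t) * b), add_comm ((1 - t) * f b)]
  exact this

/-- The order claim for terrains. After subtracting the chord `ad`, the heights at `b` and `c`
are each at most a fixed fraction in `(0, 1)` of the other, hence both are nonpositive; so the
chords `ac` and `bd`, which bound the terrain on `[a, c]` and `[b, d]`, lie below `ad`. -/
lemma Sees.order_claim {f : ℝ → ℝ} {a b c d : ℝ} (hab : a < b) (hbc : b < c) (hcd : c < d)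
    (hac : Sees f a c) (hbd : Sees f b d) : Sees f a d := by
  rw [Sees.iff_chord (by linarith)] at hac hbd ⊢
  -- `h` is the height above the chord `ad`, scaled by `d - a`
  set h : ℝ → ℝ := fun z => f z * (d - a) - ((d - z) * f a + (z - a) * f d) with hh
  have had : 0 < d - a := by linarith
  have h1 : ∀ z, a ≤ z → z ≤ c → h z * (c - a) ≤ (z - a) * h c := by
    intro z hz hz'
    have := mul_le_mul_of_nonneg_right (hac z hz hz') had.le
    simp only [hh]
    linarith
  have h2 : ∀ z, b ≤ z → z ≤ d → h z * (d - b) ≤ (d - z) * h b := by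
    intro z hz hz'
    have := mul_le_mul_of_nonneg_right (hbd z hz hz') had.le
    simp only [hh]
    linarith
  have hb := h1 b hab.le hbc.le
  have hc := h2 c hbc.le hcd.le
  have hc0 : h c ≤ 0 := by
    by_contra! hpos
    have hbpos : 0 < h b := by
      by_contra! hneg
      nlinarith
    have e1 : h b < h c := by
      by_contra! hle
      nlinarith
    have e2 : h c < h b := by
      by_contra! hle
      nlinarith
    linarith
  have hb0 : h b ≤ 0 := by
    by_contra! hneg
    nlinarith
  intro z hz hz'
  suffices hzneg : h z ≤ 0 by
    simp only [hh] at hzneg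
    linarith
  by_contra! hneg
  rcases le_total z c with hzc | hzc
  · have := h1 z hz hzc
    nlinarith
  · have := h2 z (by linarith) hz'
    nlinarith

/-- Integrality of the weighted covering problem when the incidence relation `R` has no submatrix
`[1 1; 1 0]`. Take the least point `p`, lower the weights of all guards covering it by their
minimum `δ`, and cover the other points by induction. Among the chosen guards covering `p`, the
least one covers all later points that the others cover, so it is enough to keep that one (or
to add a guard of reduced weight zero if there is none). Exactly one guard covering `p` is used,
so restoring the weights costs `δ`, while the fractional cost rises by at least `δ`. -/
lemma exists_cover_le {α β : Type*} [LinearOrder α] [LinearOrder β] (R : α → β → Prop)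
    [∀ g p, Decidable (R g p)]
    (hR : ∀ g₁ g₂ p₁ p₂, g₁ < g₂ → p₁ < p₂ → R g₁ p₁ → R g₂ p₁ → R g₂ p₂ → R g₁ p₂)
    (G : Finset α) (x : α → ℝ) (N : Finset β) :
    ∀ w : α → ℝ, (∀ g ∈ G, 0 ≤ w g) → (∀ g ∈ G, 0 ≤ x g) →
      (∀ p ∈ N, 1 ≤ ∑ g ∈ G, if R g p then x g else 0) →
      ∃ A ⊆ G, (∀ p ∈ N, ∃ g ∈ A, R g p) ∧ ∑ g ∈ A, w g ≤ ∑ g ∈ G, w g * x g := by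
  induction N using Finset.induction_on_min with
  | empty =>
    intro w hw hx _
    exact ⟨∅, by simp, by simp,
      by simpa using Finset.sum_nonneg fun g hg => mul_nonneg (hw g hg) (hx g hg)⟩
  | insert p s hp ih =>
    intro w hw hx hcov
    have hS : (G.filter fun g => R g p).Nonempty := by
      by_contra hne
      rw [Finset.not_nonempty_iff_eq_empty] at hne
      have := hcov p (Finset.mem_insert_self _ _)
      rw [← Finset.sum_filter, hne, Finset.sum_empty] at this
      linarith
    obtain ⟨m, hm, hmin⟩ := Finset.exists_min_image _ w hS
    obtain ⟨hmG, hmp⟩ := Finset.mem_filter.1 hm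
    have hδ := hw m hmG
    set w' : α → ℝ := fun g => w g - if R g p then w m else 0 with hw'
    have hw'0 : ∀ g ∈ G, 0 ≤ w' g := by
      intro g hg
      by_cases hgp : R g p
      · simpa [hw', hgp] using hmin g (Finset.mem_filter.2 ⟨hg, hgp⟩)
      · simpa [hw', hgp] using hw g hg
    obtain ⟨A, hAG, hA, hAw⟩ := ih w' hw'0 hx fun q hq => hcov q (Finset.mem_insert_of_mem hq)
    have hfrac : ∑ g ∈ G, w' g * x g + w m ≤ ∑ g ∈ G, w g * x g := by
      have h1 : ∑ g ∈ G, w g * x g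
          = ∑ g ∈ G, w' g * x g + w m * ∑ g ∈ G, if R g p then x g else 0 := by
        rw [Finset.mul_sum, ← Finset.sum_add_distrib]
        refine Finset.sum_congr rfl fun g _ => ?_
        simp only [hw']
        split_ifs <;> ring
      have := mul_le_mul_of_nonneg_left (hcov p (Finset.mem_insert_self _ _)) hδ
      linarith
    -- `k` is the only guard covering `p` that is used
    obtain ⟨k, hkG, hkp, hkA, hkw⟩ : ∃ k ∈ G, R k p ∧
        (∀ g ∈ A, R g p → ∀ q ∈ s, R g q → R k q) ∧
        w' k + ∑ g ∈ A with ¬ R g p, w' g ≤ ∑ g ∈ A, w' g := by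
      by_cases hne : (A.filter fun g => R g p).Nonempty
      · have hk := Finset.min'_mem _ hne
        set k := (A.filter fun g => R g p).min' hne
        obtain ⟨hkA, hkp⟩ := Finset.mem_filter.1 hk
        refine ⟨k, hAG hkA, hkp, fun g hg hgp q hq hgq => ?_, ?_⟩
        · have hkg : k ≤ g := Finset.min'_le _ g (Finset.mem_filter.2 ⟨hg, hgp⟩)
          rcases hkg.eq_or_lt with h | h
          · rwa [h]
          · exact hR k g p q h (hp q hq) hkp hgp hgq
        · rw [← Finset.sum_filter_add_sum_filter_not A (fun g => R g p)]
          gcongr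
          exact Finset.single_le_sum
            (fun g hg => hw'0 g (hAG (Finset.mem_filter.1 hg).1)) hk
      · have hno : ∀ g ∈ A, ¬ R g p := fun g hg hgp =>
          hne ⟨g, Finset.mem_filter.2 ⟨hg, hgp⟩⟩
        refine ⟨m, hmG, hmp, fun g hg hgp => absurd hgp (hno g hg), ?_⟩
        rw [Finset.filter_true_of_mem hno]
        simp [hw', hmp]
    refine ⟨insert k (A.filter fun g => ¬ R g p), ?_, ?_, ?_⟩
    · exact Finset.insert_subset hkG ((Finset.filter_subset _ _).trans hAG)
    · intro q hq
      rcases Finset.mem_insert.1 hq with rfl | hq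
      · exact ⟨k, Finset.mem_insert_self _ _, hkp⟩
      · obtain ⟨g, hg, hgq⟩ := hA q hq
        by_cases hgp : R g p
        · exact ⟨k, Finset.mem_insert_self _ _, hkA g hg hgp q hq hgq⟩
        · exact ⟨g, Finset.mem_insert_of_mem (Finset.mem_filter.2 ⟨hg, hgp⟩), hgq⟩
    · rw [Finset.sum_insert (by simp [hkp])]
      have h1 : w k = w' k + w m := by simp [hw', hkp]
      have h2 : ∑ g ∈ A with ¬ R g p, w g = ∑ g ∈ A with ¬ R g p, w' g :=
        Finset.sum_congr rfl fun g hg => by simp [hw', (Finset.mem_filter.1 hg).2]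
      linarith

/-- `exists_cover_le` with both orders reversed, as needed for guards to the right of the points
they cover. -/
lemma exists_cover_le_dual {α β : Type*} [LinearOrder α] [LinearOrder β] (R : α → β → Prop)
    [inst : ∀ g p, Decidable (R g p)]
    (hR : ∀ g₁ g₂ p₁ p₂, g₂ < g₁ → p₂ < p₁ → R g₁ p₁ → R g₂ p₁ → R g₂ p₂ → R g₁ p₂)
    (G : Finset α) (x : α → ℝ) (N : Finset β) (w : α → ℝ) (hw : ∀ g ∈ G, 0 ≤ w g)
    (hx : ∀ g ∈ G, 0 ≤ x g) (hcov : ∀ p ∈ N, 1 ≤ ∑ g ∈ G, if R g p then x g else 0) :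
    ∃ A ⊆ G, (∀ p ∈ N, ∃ g ∈ A, R g p) ∧ ∑ g ∈ A, w g ≤ ∑ g ∈ G, w g * x g :=
  @exists_cover_le αᵒᵈ βᵒᵈ _ _ R inst hR G x N w hw hx hcov

/-- LP-rounding gives a factor-4 guarantee for the discrete guarding problem
when the guard and point sets are disjoint. -/
theorem discrete_guarding_four_approx (f : ℝ → ℝ) (G N : Finset ℝ)
    (w x : ℝ → ℝ)
    (hGN : G ∩ N = ∅)
    (hw : ∀ g ∈ G, 0 ≤ w g) (hx : ∀ g ∈ G, 0 ≤ x g)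
    (hcov : ∀ p ∈ N, 1 ≤ ∑ g ∈ G, if Sees f g p then x g else 0) :
    ∃ A ⊆ G, (∀ p ∈ N, ∃ g ∈ A, Sees f g p) ∧
      ∑ g ∈ A, w g ≤ 4 * ∑ g ∈ G, w g * x g := by
  have h2x : ∀ g ∈ G, 0 ≤ 2 * x g := fun g hg => by linarith [hx g hg]
  obtain ⟨A, hAG, hA, hAw⟩ := exists_cover_le (fun g p : ℝ => g < p ∧ Sees f g p)
    (fun g₁ g₂ p₁ p₂ hg hp h11 h21 h22 =>
      ⟨by linarith [h11.1], Sees.order_claim hg h21.1 hp h11.2 h22.2⟩)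
    G (fun g => 2 * x g)
    (N.filter fun p => 1 ≤ ∑ g ∈ G, if g < p ∧ Sees f g p then 2 * x g else 0)
    w hw h2x (fun p hp => (Finset.mem_filter.1 hp).2)
  obtain ⟨B, hBG, hB, hBw⟩ := exists_cover_le_dual (fun g p : ℝ => p < g ∧ Sees f g p)
    (fun g₁ g₂ p₁ p₂ hg hp h11 h21 h22 =>
      ⟨by linarith [h11.1], (Sees.order_claim hp h21.1 hg h22.2.symm h11.2.symm).symm⟩)
    G (fun g => 2 * x g)
    (N.filter fun p => 1 ≤ ∑ g ∈ G, if p < g ∧ Sees f g p then 2 * x g else 0)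
    w hw h2x (fun p hp => (Finset.mem_filter.1 hp).2)
  have hAw' : ∑ g ∈ A, w g ≤ 2 * ∑ g ∈ G, w g * x g := by
    rw [Finset.mul_sum]
    exact hAw.trans_eq (Finset.sum_congr rfl fun g _ => by ring)
  have hBw' : ∑ g ∈ B, w g ≤ 2 * ∑ g ∈ G, w g * x g := by
    rw [Finset.mul_sum]
    exact hBw.trans_eq (Finset.sum_congr rfl fun g _ => by ring)
  refine ⟨A ∪ B, Finset.union_subset hAG hBG, fun p hp => ?_, ?_⟩
  · have hsplit : ∑ g ∈ G, (if g < p ∧ Sees f g p then 2 * x g else 0)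
        + ∑ g ∈ G, (if p < g ∧ Sees f g p then 2 * x g else 0)
        = 2 * ∑ g ∈ G, if Sees f g p then x g else 0 := by
      rw [Finset.mul_sum, ← Finset.sum_add_distrib]
      refine Finset.sum_congr rfl fun g hg => ?_
      have hne : g ≠ p := by
        rintro rfl
        have := Finset.mem_inter.2 ⟨hg, hp⟩
        simp [hGN] at this
      rcases lt_or_gt_of_ne hne with h | h <;> by_cases hs : Sees f g p <;>
        simp [h, h.not_gt, hs]
    have h1 := hcov p hp
    by_cases hl : 1 ≤ ∑ g ∈ G, if g < p ∧ Sees f g p then 2 * x g else 0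
    · obtain ⟨g, hg, hgp⟩ := hA p (Finset.mem_filter.2 ⟨hp, hl⟩)
      exact ⟨g, Finset.mem_union_left _ hg, hgp.2⟩
    · obtain ⟨g, hg, hgp⟩ := hB p (Finset.mem_filter.2 ⟨hp, by linarith⟩)
      exact ⟨g, Finset.mem_union_right _ hg, hgp.2⟩
  · have hinter : 0 ≤ ∑ g ∈ A ∩ B, w g :=
      Finset.sum_nonneg fun g hg => hw g (hAG (Finset.mem_inter.1 hg).1)
    have hunion := Finset.sum_union_inter (s₁ := A) (s₂ := B) (f := w)
    linarith
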